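/- Let n = 2, write X, Y for the two variables, and let g := (g_1, g_2) with g_1 := −(1 − X² − Y²)(4 − (X − 4)² − Y²) and g_2 := 1 − Y. Then: the quadratic module M(g) is Archimedean; g_1 is strictly quasiconcave on S(g) ∩ Z(g_1); and for every d ∈ ℕ₀, the degree-d Lasserre relaxation S_d(g) strictly contains the closure of the convex hull of S(g). -/

import Mathlib

open MvPolynomial Matrix

noncomputable section

/-- `S(g) = {x ∈ ℝⁿ : g₁(x) ≥ 0, …, g_m(x) ≥ 0}`. -/
def SolSet {n m : ℕ} (g : Fin m → MvPolynomial (Fin n) ℝ) : Set (Fin n → ℝ) :=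
  {x | ∀ i, 0 ≤ eval x (g i)}

/-- The extended tuple `(g₀, g₁, …, g_m)` with `g₀ := 1`. -/
def withOne {n m : ℕ} (g : Fin m → MvPolynomial (Fin n) ℝ) :
    Fin (m + 1) → MvPolynomial (Fin n) ℝ :=
  Fin.cons 1 g

/-- A polynomial is a sum of squares. -/
def IsSOS {n : ℕ} (p : MvPolynomial (Fin n) ℝ) : Prop :=
  ∃ (l : ℕ) (q : Fin l → MvPolynomial (Fin n) ℝ), p = ∑ i, q i ^ 2

/-- The quadratic module `M(g)` generated by `g₁,…,g_m` (with `g₀ := 1`). -/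
def QM {n m : ℕ} (g : Fin m → MvPolynomial (Fin n) ℝ) : Set (MvPolynomial (Fin n) ℝ) :=
  {f | ∃ s : Fin (m + 1) → MvPolynomial (Fin n) ℝ,
    (∀ i, IsSOS (s i)) ∧ f = ∑ i, s i * withOne g i}

/-- A quadratic module is Archimedean if for every polynomial `p` there is `N ∈ ℕ`
with `N - p ∈ M`. -/
def IsArchimedeanQM {n : ℕ} (M : Set (MvPolynomial (Fin n) ℝ)) : Prop :=
  ∀ p : MvPolynomial (Fin n) ℝ, ∃ N : ℕ, (N : MvPolynomial (Fin n) ℝ) - p ∈ M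

/-- `p ∈ ℝ[X]_{r_i}` where `r_i = (d - deg g_i)/2` if `g_i ≠ 0` and `r_i = -∞` if `g_i = 0`:
either `p = 0`, or `g_i ≠ 0` and `2 deg p + deg g_i ≤ d`. -/
def DegOK {n : ℕ} (d : ℕ) (gi p : MvPolynomial (Fin n) ℝ) : Prop :=
  p = 0 ∨ (gi ≠ 0 ∧ 2 * p.totalDegree + gi.totalDegree ≤ d)

/-- The `d`-truncated `k×k` matricial quadratic module `M_d^{k×k}(g)`. -/
def MatTruncQM {n : ℕ} (d : ℕ) {m : ℕ} (g : Fin m → MvPolynomial (Fin n) ℝ) (k : ℕ) :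
    Set (Matrix (Fin k) (Fin k) (MvPolynomial (Fin n) ℝ)) :=
  {H | ∃ (N : ℕ) (P : Fin (m + 1) → Fin N → Matrix (Fin k) (Fin k) (MvPolynomial (Fin n) ℝ)),
    (∀ i j a b, DegOK d (withOne g i) (P i j a b)) ∧
    H = ∑ i, ∑ j, withOne g i • ((P i j)ᵀ * P i j)}


/-- The `d`-truncated quadratic module `M_d(g)`. -/
def TruncQM {n : ℕ} (d : ℕ) {m : ℕ} (g : Fin m → MvPolynomial (Fin n) ℝ) :
    Set (MvPolynomial (Fin n) ℝ) :=
  {f | ∃ (N : ℕ) (p : Fin (m + 1) → Fin N → MvPolynomial (Fin n) ℝ),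
    (∀ i j, DegOK d (withOne g i) (p i j)) ∧
    f = ∑ i, ∑ j, p i j ^ 2 * withOne g i}

/-- The degree `d` Lasserre relaxation `S_d(g)`: all `x ∈ ℝⁿ` admitting a linear functional
`L` on `ℝ[X]_d` with `L(1) = 1`, `L(X_i) = x_i` and `L ≥ 0` on `M_d(g)`. -/
def Lasserre {n : ℕ} (d : ℕ) {m : ℕ} (g : Fin m → MvPolynomial (Fin n) ℝ) :
    Set (Fin n → ℝ) :=
  {x | ∃ L : MvPolynomial.restrictTotalDegree (Fin n) ℝ d →ₗ[ℝ] ℝ,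
    (∀ p : MvPolynomial.restrictTotalDegree (Fin n) ℝ d,
      (p : MvPolynomial (Fin n) ℝ) = 1 → L p = 1) ∧
    (∀ i : Fin n, ∀ p : MvPolynomial.restrictTotalDegree (Fin n) ℝ d,
      (p : MvPolynomial (Fin n) ℝ) = X i → L p = x i) ∧
    (∀ p : MvPolynomial.restrictTotalDegree (Fin n) ℝ d,
      (p : MvPolynomial (Fin n) ℝ) ∈ TruncQM d g → 0 ≤ L p)}


/-- The real zero set `Z(p)` of a polynomial `p`. -/
def ZSet {n : ℕ} (p : MvPolynomial (Fin n) ℝ) : Set (Fin n → ℝ) :=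
  {x | eval x p = 0}

/-- The gradient `∇g(x)` of a polynomial `g` at a point `x`. -/
def gradEval {n : ℕ} (g : MvPolynomial (Fin n) ℝ) (x : Fin n → ℝ) : Fin n → ℝ :=
  fun i => eval x (pderiv i g)

/-- The Hessian `(Hess g)(x)` of a polynomial `g` at a point `x`. -/
def hessEval {n : ℕ} (g : MvPolynomial (Fin n) ℝ) (x : Fin n → ℝ) :
    Matrix (Fin n) (Fin n) ℝ :=
  Matrix.of fun i j => eval x (pderiv i (pderiv j g))

/-- `g` is strictly quasiconcave at `x`. -/
def StrictlyQuasiconcaveAt {n : ℕ} (g : MvPolynomial (Fin n) ℝ) (x : Fin n → ℝ) : Prop :=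
  ∀ v : Fin n → ℝ, v ≠ 0 → gradEval g x ⬝ᵥ v = 0 → v ⬝ᵥ (hessEval g x) *ᵥ v < 0


/-! ### Sums of squares and quadratic modules -/

theorem isSOS_sq {n : ℕ} (p : MvPolynomial (Fin n) ℝ) : IsSOS (p ^ 2) :=
  ⟨1, fun _ => p, by simp⟩

theorem isSOS_zero {n : ℕ} : IsSOS (0 : MvPolynomial (Fin n) ℝ) :=
  ⟨0, fun _ => 0, by simp⟩

theorem isSOS_one {n : ℕ} : IsSOS (1 : MvPolynomial (Fin n) ℝ) := by
  simpa using isSOS_sq (1 : MvPolynomial (Fin n) ℝ)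

theorem IsSOS.add' {n : ℕ} {p q : MvPolynomial (Fin n) ℝ} (hp : IsSOS p) (hq : IsSOS q) :
    IsSOS (p + q) := by
  obtain ⟨l, a, rfl⟩ := hp
  obtain ⟨k, b, rfl⟩ := hq
  exact ⟨l + k, Fin.append a b, by simp [Fin.sum_univ_add]⟩

theorem IsSOS.sq_mul {n : ℕ} {p : MvPolynomial (Fin n) ℝ} (q : MvPolynomial (Fin n) ℝ)
    (hp : IsSOS p) : IsSOS (q ^ 2 * p) := by
  obtain ⟨l, a, rfl⟩ := hp
  exact ⟨l, fun i => q * a i, by simp [Finset.mul_sum, mul_pow]⟩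

theorem QM.add' {n m : ℕ} {g : Fin m → MvPolynomial (Fin n) ℝ} {p q : MvPolynomial (Fin n) ℝ}
    (hp : p ∈ QM g) (hq : q ∈ QM g) : p + q ∈ QM g := by
  obtain ⟨s, hs, rfl⟩ := hp
  obtain ⟨t, ht, rfl⟩ := hq
  exact ⟨fun i => s i + t i, fun i => (hs i).add' (ht i), by
    simp [add_mul, Finset.sum_add_distrib]⟩

theorem QM.sq_mul {n m : ℕ} {g : Fin m → MvPolynomial (Fin n) ℝ} {p : MvPolynomial (Fin n) ℝ}
    (q : MvPolynomial (Fin n) ℝ) (hp : p ∈ QM g) : q ^ 2 * p ∈ QM g := by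
  obtain ⟨s, hs, rfl⟩ := hp
  exact ⟨fun i => q ^ 2 * s i, fun i => (hs i).sq_mul q, by
    simp [Finset.mul_sum, mul_assoc]⟩

theorem QM.one_mem {n m : ℕ} {g : Fin m → MvPolynomial (Fin n) ℝ} : 1 ∈ QM g := by
  refine ⟨Fin.cons 1 0, fun i => ?_, ?_⟩
  · refine Fin.cases ?_ (fun j => ?_) i
    · simpa using isSOS_one
    · simpa using isSOS_zero
  · simp [Fin.sum_univ_succ, withOne]

theorem QM.sq_mem {n m : ℕ} {g : Fin m → MvPolynomial (Fin n) ℝ} (q : MvPolynomial (Fin n) ℝ) :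
    q ^ 2 ∈ QM g := by
  simpa using QM.sq_mul q (QM.one_mem (g := g))

theorem QM.gen_mem {n m : ℕ} {g : Fin m → MvPolynomial (Fin n) ℝ} (k : Fin m) : g k ∈ QM g := by
  classical
  refine ⟨Fin.cons 0 (Pi.single k 1), fun i => ?_, ?_⟩
  · refine Fin.cases ?_ (fun j => ?_) i
    · simpa using isSOS_zero
    · by_cases h : j = k
      · subst h; simpa using isSOS_one
      · simpa [h] using isSOS_zero
  · simp [Fin.sum_univ_succ, withOne, Pi.single_apply]

theorem QM.C_mul {n m : ℕ} {g : Fin m → MvPolynomial (Fin n) ℝ} {p : MvPolynomial (Fin n) ℝ}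
    {c : ℝ} (hc : 0 ≤ c) (hp : p ∈ QM g) : C c * p ∈ QM g := by
  have := QM.sq_mul (C (Real.sqrt c)) hp
  rwa [← C_pow, Real.sq_sqrt hc] at this

theorem QM.C_mem {n m : ℕ} {g : Fin m → MvPolynomial (Fin n) ℝ}
    {c : ℝ} (hc : 0 ≤ c) : C c ∈ QM g := by
  simpa using QM.C_mul hc (QM.one_mem (g := g))

/-- Bounded elements with respect to `M(g)`. -/
def Bdd {n m : ℕ} (g : Fin m → MvPolynomial (Fin n) ℝ) (p : MvPolynomial (Fin n) ℝ) : Prop :=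
  ∃ c : ℝ, 0 < c ∧ C c - p ∈ QM g ∧ C c + p ∈ QM g

theorem Bdd.add' {n m : ℕ} {g : Fin m → MvPolynomial (Fin n) ℝ} {p q : MvPolynomial (Fin n) ℝ}
    (hp : Bdd g p) (hq : Bdd g q) : Bdd g (p + q) := by
  obtain ⟨a, ha, h1, h2⟩ := hp
  obtain ⟨b, hb, h3, h4⟩ := hq
  refine ⟨a + b, by positivity, ?_, ?_⟩
  · convert QM.add' h1 h3 using 1; simp only [C_add]; ring
  · convert QM.add' h2 h4 using 1; simp only [C_add]; ring

theorem Bdd.neg' {n m : ℕ} {g : Fin m → MvPolynomial (Fin n) ℝ} {p : MvPolynomial (Fin n) ℝ}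
    (hp : Bdd g p) : Bdd g (-p) := by
  obtain ⟨a, ha, h1, h2⟩ := hp
  refine ⟨a, ha, ?_, ?_⟩
  · convert h2 using 1; ring
  · convert h1 using 1; ring

theorem Bdd.C_mul_pos {n m : ℕ} {g : Fin m → MvPolynomial (Fin n) ℝ} {p : MvPolynomial (Fin n) ℝ}
    {t : ℝ} (ht : 0 < t) (hp : Bdd g p) : Bdd g (C t * p) := by
  obtain ⟨a, ha, h1, h2⟩ := hp
  refine ⟨t * a, by positivity, ?_, ?_⟩
  · convert QM.C_mul ht.le h1 using 1; simp only [C_mul]; ring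
  · convert QM.C_mul ht.le h2 using 1; simp only [C_mul]; ring

theorem Bdd.sq {n m : ℕ} {g : Fin m → MvPolynomial (Fin n) ℝ} {p : MvPolynomial (Fin n) ℝ}
    (hp : Bdd g p) : Bdd g (p ^ 2) := by
  obtain ⟨a, ha, h1, h2⟩ := hp
  refine ⟨a ^ 2, by positivity, ?_, ?_⟩
  · have h3 := QM.C_mul (c := 1 / (2 * a)) (by positivity)
      (QM.add' (QM.sq_mul (C a + p) h1) (QM.sq_mul (C a - p) h2))
    convert h3 using 1
    have e : (C (1 / (2 * a)) * C (2 * a) : MvPolynomial (Fin n) ℝ) = 1 := by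
      rw [← C_mul, one_div_mul_cancel (by positivity), C_1]
    have e2 : (C (2 * a) : MvPolynomial (Fin n) ℝ) = 2 * C a := by
      rw [C_mul]; rfl
    rw [e2] at e
    rw [C_pow]
    linear_combination (-(C a ^ 2 - p ^ 2)) * e
  · exact QM.add' (QM.C_mem (by positivity)) (QM.sq_mem p)

theorem Bdd.mul' {n m : ℕ} {g : Fin m → MvPolynomial (Fin n) ℝ} {p q : MvPolynomial (Fin n) ℝ}
    (hp : Bdd g p) (hq : Bdd g q) : Bdd g (p * q) := by
  have h := ((hp.add' hq).sq.add' (hp.add' hq.neg').sq.neg').C_mul_pos (t := 1 / 4) (by norm_num)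
  convert h using 1
  have e : (C (1 / 4) * 4 : MvPolynomial (Fin n) ℝ) = 1 := by
    have : (4 : MvPolynomial (Fin n) ℝ) = C 4 := rfl
    rw [this, ← C_mul]; norm_num
  linear_combination (-(p * q)) * e

theorem Bdd.of_C {n m : ℕ} {g : Fin m → MvPolynomial (Fin n) ℝ} (a : ℝ) : Bdd g (C a) := by
  refine ⟨|a| + 1, by positivity, ?_, ?_⟩
  · rw [← C_sub]; exact QM.C_mem (by linarith [le_abs_self a])
  · rw [← C_add]; exact QM.C_mem (by linarith [neg_abs_le a])

/-- If `c - p² ∈ M(g)`, then `p` is bounded. -/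
theorem Bdd.of_sq {n m : ℕ} {g : Fin m → MvPolynomial (Fin n) ℝ} {p : MvPolynomial (Fin n) ℝ}
    {c : ℝ} (hc : 0 ≤ c) (h : C c - p ^ 2 ∈ QM g) : Bdd g p := by
  have e : (C (1 / 2) * 2 : MvPolynomial (Fin n) ℝ) = 1 := by
    have : (2 : MvPolynomial (Fin n) ℝ) = C 2 := rfl
    rw [this, ← C_mul]; norm_num
  have e2 : (C (1 / 2) ^ 2 + C (3 / 4) : MvPolynomial (Fin n) ℝ) = 1 := by
    rw [← C_pow, ← C_add]; norm_num
  have h34 : C (3 / 4 : ℝ) ∈ QM g := QM.C_mem (by norm_num)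
  refine ⟨c + 1, by positivity, ?_, ?_⟩
  · convert QM.add' (QM.add' h (QM.sq_mem (p - C (1 / 2)))) h34 using 1
    simp only [C_add, C_1]
    linear_combination p * e - e2
  · convert QM.add' (QM.add' h (QM.sq_mem (p + C (1 / 2)))) h34 using 1
    simp only [C_add, C_1]
    linear_combination -p * e - e2

theorem isArchimedean_of_X {n m : ℕ} {g : Fin m → MvPolynomial (Fin n) ℝ}
    (h : ∀ i, Bdd g (X i)) : IsArchimedeanQM (QM g) := by
  intro p
  have hp : Bdd g p := by
    induction p using MvPolynomial.induction_on with
    | C a => exact Bdd.of_C a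
    | add p q hp hq => exact hp.add' hq
    | mul_X p i hp => exact hp.mul' (h i)
  obtain ⟨c, hc, h1, -⟩ := hp
  obtain ⟨N, hN⟩ := exists_nat_ge c
  refine ⟨N, ?_⟩
  convert QM.add' (QM.C_mem (g := g) (sub_nonneg.2 hN)) h1 using 1
  have : (N : MvPolynomial (Fin n) ℝ) = C (N : ℝ) := by simp
  rw [this, C_sub]; ring

theorem arch_main (g : Fin 2 → MvPolynomial (Fin 2) ℝ)
    (hg : g 0 = -((1 - X 0 ^ 2 - X 1 ^ 2) * (4 - (X 0 - 4) ^ 2 - X 1 ^ 2))) :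
    IsArchimedeanQM (QM g) := by
  have h2 : C (2 : ℝ) * (X 0 - 6) ^ 2 ∈ QM g := QM.C_mul (by norm_num) (QM.sq_mem _)
  have h18 : C (18 : ℝ) * (X 1) ^ 2 ∈ QM g := QM.C_mul (by norm_num) (QM.sq_mem _)
  have e2 : (C 2 : MvPolynomial (Fin 2) ℝ) = 2 := rfl
  have e18 : (C 18 : MvPolynomial (Fin 2) ℝ) = 18 := rfl
  have e100 : (C 100 : MvPolynomial (Fin 2) ℝ) = 100 := rfl
  have key : C (100 : ℝ) - X 0 ^ 2 - X 1 ^ 2 ∈ QM g := by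
    convert QM.add' (QM.add' (QM.add' (QM.sq_mem (X 0 ^ 2 + X 1 ^ 2 - 4 * X 0 - 4)) h2) h18)
      (QM.gen_mem 0) using 1
    rw [hg, e2, e18, e100]; ring
  apply isArchimedean_of_X
  intro i
  apply Bdd.of_sq (c := 100) (by norm_num)
  fin_cases i
  · convert QM.add' key (QM.sq_mem (X 1)) using 1; simp
  · convert QM.add' key (QM.sq_mem (X 0)) using 1; simp; ring

/-! ### Strict quasiconcavity -/

theorem quasi_main (g : MvPolynomial (Fin 2) ℝ)
    (hg : g = -((1 - X 0 ^ 2 - X 1 ^ 2) * (4 - (X 0 - 4) ^ 2 - X 1 ^ 2)))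
    (x : Fin 2 → ℝ) (hx : eval x g = 0) : StrictlyQuasiconcaveAt g x := by
  intro v hv hgrad
  have hX4 : ∀ i : Fin 2, pderiv i (4 : MvPolynomial (Fin 2) ℝ) = 0 := fun i =>
    (pderiv_C (i := i) (a := (4 : ℝ)))
  have hX2 : ∀ i : Fin 2, pderiv i (2 : MvPolynomial (Fin 2) ℝ) = 0 := fun i =>
    (pderiv_C (i := i) (a := (2 : ℝ)))
  have e4 : eval x (4 : MvPolynomial (Fin 2) ℝ) = 4 := eval_C (f := x) (4 : ℝ)
  have e2 : eval x (2 : MvPolynomial (Fin 2) ℝ) = 2 := eval_C (f := x) (2 : ℝ)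
  have hv' : 0 < v 0 ^ 2 + v 1 ^ 2 := by
    by_contra hcon
    apply hv
    have h0 : v 0 = 0 := by nlinarith [sq_nonneg (v 0), sq_nonneg (v 1)]
    have h1 : v 1 = 0 := by nlinarith [sq_nonneg (v 0), sq_nonneg (v 1)]
    ext i; fin_cases i <;> simp [h0, h1]
  subst hg
  simp [e4] at hx
  simp [gradEval, dotProduct, Fin.sum_univ_two, pderiv_X, Pi.single_apply, hX4, hX2, e4, e2,
    Derivation.leibniz, Derivation.leibniz_pow] at hgrad
  simp [hessEval, dotProduct, Matrix.mulVec, Fin.sum_univ_two, pderiv_X, Pi.single_apply, hX4, hX2,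
    e4, e2, Derivation.leibniz, Derivation.leibniz_pow]
  generalize x 0 = a at *
  generalize x 1 = b at *
  generalize v 0 = s at *
  generalize v 1 = t at *
  have hgr : (1 - a ^ 2 - b ^ 2) * ((a - 4) * s + b * t)
      + (4 - (a - 4) ^ 2 - b ^ 2) * (a * s + b * t) = 0 := by
    linear_combination (1 / 2) * hgrad
  suffices hs : 2 * ((1 - a ^ 2 - b ^ 2) + (4 - (a - 4) ^ 2 - b ^ 2)) * (s ^ 2 + t ^ 2)
      - 8 * (a * s + b * t) * ((a - 4) * s + b * t) < 0 by
    linarith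
  rcases hx with h | h
  · have hq : 4 - (a - 4) ^ 2 - b ^ 2 < 0 := by nlinarith
    have hl : a * s + b * t = 0 := by
      rw [h, zero_mul, zero_add] at hgr
      exact (mul_eq_zero.1 hgr).resolve_left hq.ne
    rw [h, hl]
    nlinarith
  · have hq : 1 - a ^ 2 - b ^ 2 < 0 := by nlinarith
    have hl : (a - 4) * s + b * t = 0 := by
      rw [h, zero_mul, add_zero] at hgr
      exact (mul_eq_zero.1 hgr).resolve_left hq.ne
    rw [h, hl]
    nlinarith

/-! ### Lasserre relaxations -/

theorem mem_lasserre {n m d : ℕ} {g : Fin m → MvPolynomial (Fin n) ℝ}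
    (Φ : MvPolynomial (Fin n) ℝ →ₗ[ℝ] ℝ) (h1 : Φ 1 = 1)
    (hpos : ∀ i (p : MvPolynomial (Fin n) ℝ), p.totalDegree ≤ d → 0 ≤ Φ (p ^ 2 * withOne g i))
    (x : Fin n → ℝ) (hx : ∀ i, Φ (X i) = x i) : x ∈ Lasserre d g := by
  refine ⟨Φ ∘ₗ Submodule.subtype _, ?_, ?_, ?_⟩
  · intro p hp
    simp [hp, h1]
  · intro i p hp
    simp [hp, hx]
  · rintro ⟨p, hp'⟩ ⟨N, q, hq, hp⟩
    simp only at hp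
    subst hp
    simp only [LinearMap.comp_apply, Submodule.subtype_apply, map_sum]
    refine Finset.sum_nonneg fun i _ => Finset.sum_nonneg fun j _ => hpos i _ ?_
    rcases hq i j with h | ⟨-, h⟩
    · simp [h]
    · omega

theorem solSet_subset_lasserre {n m d : ℕ} {g : Fin m → MvPolynomial (Fin n) ℝ} :
    SolSet g ⊆ Lasserre d g := by
  intro x hx
  refine mem_lasserre (MvPolynomial.aeval x : MvPolynomial (Fin n) ℝ →ₐ[ℝ] ℝ).toLinearMap
    (by simp) ?_ x (by simp)
  intro i p _
  refine Fin.cases ?_ (fun j => ?_) i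
  · simp [withOne]; positivity
  · have := hx j
    simp only [withOne, Fin.cons_succ, AlgHom.toLinearMap_apply, map_mul, map_pow,
      MvPolynomial.aeval_eq_eval]
    exact mul_nonneg (sq_nonneg _) this

theorem convex_lasserre {n m d : ℕ} {g : Fin m → MvPolynomial (Fin n) ℝ} :
    Convex ℝ (Lasserre d g) := by
  rintro x ⟨L, hL1, hL2, hL3⟩ y ⟨K, hK1, hK2, hK3⟩ a b ha hb hab
  refine ⟨a • L + b • K, ?_, ?_, ?_⟩
  · intro p hp
    simp [hL1 p hp, hK1 p hp, hab]
  · intro i p hp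
    simp [hL2 i p hp, hK2 i p hp]
  · intro p hp
    have h1 := hL3 p hp
    have h2 := hK3 p hp
    simp only [LinearMap.add_apply, LinearMap.smul_apply, smul_eq_mul]
    positivity

theorem isCompact_convexHull_union {E : Type*} [NormedAddCommGroup E] [NormedSpace ℝ E]
    {A B : Set E} (hA : IsCompact A) (hB : IsCompact B) (cA : Convex ℝ A) (cB : Convex ℝ B)
    (nA : A.Nonempty) (nB : B.Nonempty) : IsCompact (convexHull ℝ (A ∪ B)) := by
  rw [cA.convexHull_union cB nA nB]
  have : convexJoin ℝ A B = (fun p : ℝ × E × E => (1 - p.1) • p.2.1 + p.1 • p.2.2) ''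
      (Set.Icc (0 : ℝ) 1 ×ˢ A ×ˢ B) := by
    ext z
    simp only [mem_convexJoin, segment_eq_image, Set.mem_image, Set.mem_prod, Prod.exists]
    constructor
    · rintro ⟨a, ha, b, hb, t, ht, rfl⟩
      exact ⟨t, a, b, ⟨ht, ha, hb⟩, rfl⟩
    · rintro ⟨t, a, b, ⟨ht, ha, hb⟩, rfl⟩
      exact ⟨a, ha, b, hb, t, ht, rfl⟩
  rw [this]
  exact (isCompact_Icc.prod (hA.prod hB)).image (by fun_prop)

theorem sq_comb_le {a b u v : ℝ} (ha : 0 ≤ a) (hb : 0 ≤ b) (hab : a + b = 1) :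
    (a * u + b * v) ^ 2 ≤ a * u ^ 2 + b * v ^ 2 := by
  obtain rfl : b = 1 - a := by linarith
  nlinarith [mul_nonneg (mul_nonneg ha hb) (sq_nonneg (u - v))]

/-- Disk of center `(c, 0)` and squared radius `r`, cut with `y ≤ 1`. -/
def CutDisk (c r : ℝ) : Set (Fin 2 → ℝ) := {x | (x 0 - c) ^ 2 + x 1 ^ 2 ≤ r ∧ x 1 ≤ 1}

theorem convex_cutDisk (c r : ℝ) : Convex ℝ (CutDisk c r) := by
  rintro x ⟨hx1, hx2⟩ y ⟨hy1, hy2⟩ a b ha hb hab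
  have h1 := sq_comb_le (u := x 0 - c) (v := y 0 - c) ha hb hab
  have h2 := sq_comb_le (u := x 1) (v := y 1) ha hb hab
  have e : a * x 0 + b * y 0 - c = a * (x 0 - c) + b * (y 0 - c) := by
    linear_combination c * hab
  constructor
  · simp only [Pi.add_apply, Pi.smul_apply, smul_eq_mul, e]
    nlinarith [mul_le_mul_of_nonneg_left hx1 ha, mul_le_mul_of_nonneg_left hy1 hb]
  · simp only [Pi.add_apply, Pi.smul_apply, smul_eq_mul]
    nlinarith [mul_le_mul_of_nonneg_left hx2 ha, mul_le_mul_of_nonneg_left hy2 hb]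

theorem isCompact_cutDisk (c r : ℝ) : IsCompact (CutDisk c r) := by
  have hcl : IsClosed (CutDisk c r) := by
    apply IsClosed.and
    · exact isClosed_le (by fun_prop) (by fun_prop)
    · exact isClosed_le (by fun_prop) (by fun_prop)
  refine IsCompact.of_isClosed_subset
    (isCompact_Icc (a := (![c - (r + 1), -(r + 1)] : Fin 2 → ℝ)) (b := ![c + (r + 1), r + 1]))
    hcl ?_
  rintro x ⟨h, -⟩
  have hr : 0 ≤ r := le_trans (by positivity) h
  have h0 : |x 0 - c| ≤ r + 1 := abs_le_of_sq_le_sq (by nlinarith [sq_nonneg (x 1)]) (by linarith)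
  have h1 : |x 1| ≤ r + 1 := abs_le_of_sq_le_sq (by nlinarith [sq_nonneg (x 0 - c)]) (by linarith)
  rw [abs_le] at h0 h1
  constructor
  · intro i; fin_cases i <;> simp <;> linarith
  · intro i; fin_cases i <;> simp <;> linarith

theorem eval_g1 (x : Fin 2 → ℝ) :
    eval x (-((1 - X 0 ^ 2 - X 1 ^ 2) * (4 - (X 0 - 4) ^ 2 - X 1 ^ 2)) : MvPolynomial (Fin 2) ℝ)
      = -((1 - x 0 ^ 2 - x 1 ^ 2) * (4 - (x 0 - 4) ^ 2 - x 1 ^ 2)) := by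
  have e4 : eval x (4 : MvPolynomial (Fin 2) ℝ) = 4 := eval_C (f := x) (4 : ℝ)
  simp [e4]

theorem solSet_eq (g : Fin 2 → MvPolynomial (Fin 2) ℝ)
    (hg : g = ![-((1 - X 0 ^ 2 - X 1 ^ 2) * (4 - (X 0 - 4) ^ 2 - X 1 ^ 2)), 1 - X 1]) :
    SolSet g = CutDisk 0 1 ∪ CutDisk 4 4 := by
  subst hg
  ext x
  simp only [SolSet, CutDisk, Set.mem_ofPred_eq, Set.mem_union, Fin.forall_fin_two,
    Matrix.cons_val_zero, Matrix.cons_val_one, eval_g1, map_sub, map_one, eval_X]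
  generalize x 0 = a
  generalize x 1 = b
  constructor
  · rintro ⟨h1, h2⟩
    by_cases h : a ^ 2 + b ^ 2 ≤ 1
    · left; constructor <;> linarith
    · right
      refine ⟨?_, by linarith⟩
      push Not at h
      by_contra hcon
      push Not at hcon
      nlinarith [mul_pos (sub_pos.2 h) (sub_pos.2 hcon)]
  · rintro (⟨h1, h2⟩ | ⟨h1, h2⟩)
    · refine ⟨?_, by linarith⟩
      have h3 : 0 ≤ 1 - a ^ 2 - b ^ 2 := by linarith
      have h4 : 0 ≤ -(4 - (a - 4) ^ 2 - b ^ 2) := by nlinarith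
      nlinarith [mul_nonneg h3 h4]
    · refine ⟨?_, by linarith⟩
      have h3 : 0 ≤ 4 - (a - 4) ^ 2 - b ^ 2 := by linarith
      have h4 : 0 ≤ -(1 - a ^ 2 - b ^ 2) := by nlinarith
      nlinarith [mul_nonneg h3 h4]

/-- The convex set separating the points `(x, 1)` with `x < 0` from `S(g)`. -/
def SepSet : Set (Fin 2 → ℝ) := {x | x 1 < 1 ∨ (x 1 = 1 ∧ 0 ≤ x 0)}

theorem convex_sepSet : Convex ℝ SepSet := by
  rintro x hx y hy a b ha hb hab
  rcases ha.eq_or_lt with rfl | ha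
  · obtain rfl : b = 1 := by linarith
    simpa using hy
  rcases hb.eq_or_lt with rfl | hb
  · obtain rfl : a = 1 := by linarith
    simpa using hx
  simp only [SepSet, Set.mem_ofPred_eq, Pi.add_apply, Pi.smul_apply, smul_eq_mul] at *
  rcases hx with hx | ⟨hx, hx'⟩ <;> rcases hy with hy | ⟨hy, hy'⟩
  · left; nlinarith
  · left; nlinarith
  · left; nlinarith
  · right; rw [hx, hy]; exact ⟨by linarith, by positivity⟩

theorem cutDisk_subset_sepSet : CutDisk 0 1 ∪ CutDisk 4 4 ⊆ SepSet := by
  rintro x hx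
  simp only [SepSet, CutDisk, Set.mem_ofPred_eq, Set.mem_union] at *
  rcases hx with ⟨h1, h2⟩ | ⟨h1, h2⟩ <;> rcases h2.lt_or_eq with h | h
  · exact Or.inl h
  · refine Or.inr ⟨h, ?_⟩
    rw [h] at h1
    nlinarith
  · exact Or.inl h
  · refine Or.inr ⟨h, ?_⟩
    rw [h] at h1
    nlinarith

/-- Interpolation estimate on the line `y = 1`. -/
theorem interp_bound (d : ℕ) : ∃ (v : Fin (d + 1) → ℝ) (K : ℝ), 1 ≤ K ∧
    (∀ i, 3 ≤ v i ∧ v i ≤ 5) ∧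
    ∀ (p : MvPolynomial (Fin 2) ℝ), p.totalDegree ≤ d → ∀ δ : ℝ, 0 ≤ δ → δ ≤ 1 →
      eval ![-δ, 1] p ^ 2 ≤ K * ∑ i, eval ![v i, 1] p ^ 2 := by
  set v : Fin (d + 1) → ℝ := fun i => 3 + (i : ℝ) / (d + 1) with hv
  have hinj : Function.Injective v := by
    intro i j hij
    simp only [hv] at hij
    have hd : (d + 1 : ℝ) ≠ 0 := by positivity
    field_simp at hij
    have : (i : ℝ) = j := by linarith
    exact Fin.ext (by exact_mod_cast this)
  set F : ℝ → ℝ := fun δ => ∑ i, (Polynomial.eval (-δ) (Lagrange.basis Finset.univ v i)) ^ 2 with hF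
  have hcont : Continuous F := by
    simp only [hF]
    refine continuous_finsetSum _ fun i _ => ?_
    exact ((Polynomial.continuous _).comp continuous_neg).pow 2
  obtain ⟨K, hK⟩ := (isCompact_Icc (a := (0 : ℝ)) (b := 1)).bddAbove_image hcont.continuousOn
  refine ⟨v, max K 1, le_max_right _ _, ?_, ?_⟩
  · intro i
    have h1 : (i : ℝ) / (d + 1) ≤ 1 := by
      rw [div_le_one (by positivity)]
      have := i.2.le
      exact_mod_cast this
    have h2 : 0 ≤ (i : ℝ) / (d + 1) := by positivity
    simp only [hv]
    constructor <;> linarith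
  · intro p hp δ h0 h1
    set q : Polynomial ℝ := MvPolynomial.aeval ![Polynomial.X, 1] p with hq
    have hqd : q.natDegree ≤ d := by
      have := MvPolynomial.aeval_natDegree_le p hp (n := 1)
        (![Polynomial.X, 1] : Fin 2 → Polynomial ℝ) (by intro i; fin_cases i <;> simp)
      simpa using this
    have hev : ∀ t : ℝ, eval ![t, 1] p = Polynomial.eval t q := by
      intro t
      rw [hq, ← Polynomial.coe_evalRingHom, MvPolynomial.aeval_def, MvPolynomial.eval₂_eq,
        MvPolynomial.eval_eq]
      simp only [map_sum, map_mul, map_prod, map_pow, Polynomial.coe_evalRingHom]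
      refine Finset.sum_congr rfl fun m _ => ?_
      congr 1
      · simp
      · refine Finset.prod_congr rfl fun i _ => ?_
        fin_cases i <;> simp
    have hdeg : q.degree < (Finset.univ : Finset (Fin (d + 1))).card := by
      refine lt_of_le_of_lt Polynomial.degree_le_natDegree ?_
      simp only [Finset.card_univ, Fintype.card_fin]
      exact_mod_cast Nat.lt_succ_of_le hqd
    have hint := Lagrange.eq_interpolate (s := Finset.univ) (v := v) (f := q) hinj.injOn hdeg
    have hval : Polynomial.eval (-δ) q = ∑ i, Polynomial.eval (v i) q *
        Polynomial.eval (-δ) (Lagrange.basis Finset.univ v i) := by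
      conv_lhs => rw [hint]
      simp [Lagrange.interpolate_apply, Polynomial.eval_finsetSum]
    simp only [hev]
    rw [hval]
    refine (Finset.sum_mul_sq_le_sq_mul_sq _ _ _).trans ?_
    rw [mul_comm]
    refine mul_le_mul_of_nonneg_right ?_ (Finset.sum_nonneg fun i _ => sq_nonneg _)
    exact (hK ⟨δ, ⟨h0, h1⟩, rfl⟩).trans (le_max_left _ _)

theorem exists_outside (d : ℕ) (g : Fin 2 → MvPolynomial (Fin 2) ℝ)
    (hg : g = ![-((1 - X 0 ^ 2 - X 1 ^ 2) * (4 - (X 0 - 4) ^ 2 - X 1 ^ 2)), 1 - X 1]) :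
    ∃ x ∈ Lasserre d g, x 1 = 1 ∧ x 0 < 0 := by
  obtain ⟨v, K, hK1, hv, hK⟩ := interp_bound d
  set N : ℝ := (d : ℝ) + 1 with hN
  have hN1 : 1 ≤ N := by rw [hN]; linarith [(Nat.cast_nonneg d : (0 : ℝ) ≤ d)]
  have hNK : 1 ≤ N * K := by nlinarith
  set δ : ℝ := 1 / (11 * (N * K)) with hδ
  have hδ0 : 0 < δ := by positivity
  have hδe : 11 * (N * K) * δ = 1 := by rw [hδ]; field_simp
  have hδ1 : δ ≤ 1 := by nlinarith
  set μ : ℝ := 2 * K * δ ^ 2 with hμ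
  have hμ0 : 0 ≤ μ := by positivity
  set w : ℝ := 1 + N * μ with hw
  have hw0 : 0 < w := by positivity
  have hsumle : ∑ i, v i ≤ 5 * N := by
    calc ∑ i, v i ≤ ∑ _i : Fin (d + 1), (5 : ℝ) := Finset.sum_le_sum fun i _ => (hv i).2
      _ = 5 * N := by simp [hN]; ring
  let ev : (Fin 2 → ℝ) → (MvPolynomial (Fin 2) ℝ →ₗ[ℝ] ℝ) := fun x =>
    (MvPolynomial.aeval x : MvPolynomial (Fin 2) ℝ →ₐ[ℝ] ℝ).toLinearMap
  let Φ : MvPolynomial (Fin 2) ℝ →ₗ[ℝ] ℝ := w⁻¹ • (ev ![-δ, 1] + μ • ∑ i, ev ![v i, 1])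
  have hΦ : ∀ p, Φ p = w⁻¹ * (eval ![-δ, 1] p + μ * ∑ i, eval ![v i, 1] p) := by
    intro p
    simp [Φ, ev, LinearMap.sum_apply, MvPolynomial.aeval_eq_eval, mul_add]
  refine ⟨fun i => Φ (X i), mem_lasserre Φ ?_ ?_ _ (fun _ => rfl), ?_, ?_⟩
  · rw [hΦ]
    simp only [map_one, Finset.sum_const, Finset.card_univ, Fintype.card_fin, nsmul_eq_mul]
    push_cast
    rw [inv_mul_eq_one₀ hw0.ne', hw, hN]; ring
  · intro i p hp
    rw [hΦ]
    refine mul_nonneg (by positivity) ?_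
    subst hg
    fin_cases i
    · simp only [withOne, Fin.zero_eta, Fin.cons_zero, mul_one, map_pow]
      positivity
    · have e1 : withOne (![-((1 - X 0 ^ 2 - X 1 ^ 2) * (4 - (X 0 - 4) ^ 2 - X 1 ^ 2)),
          1 - X 1] : Fin 2 → MvPolynomial (Fin 2) ℝ) 1 =
          -((1 - X 0 ^ 2 - X 1 ^ 2) * (4 - (X 0 - 4) ^ 2 - X 1 ^ 2)) := rfl
      change 0 ≤ eval _ (_ * withOne _ 1) + μ * ∑ i, eval _ (_ * withOne _ 1)
      rw [e1]
      simp only [map_mul, map_pow, eval_g1]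
      simp only [Matrix.cons_val_zero, Matrix.cons_val_one]
      have hb := hK p hp δ hδ0.le hδ1
      set A := eval ![-δ, 1] p ^ 2 with hA
      have hA0 : 0 ≤ A := sq_nonneg _
      have hs : 18 * ∑ i, eval ![v i, 1] p ^ 2 ≤ ∑ i, eval ![v i, 1] p ^ 2 *
          -((1 - v i ^ 2 - 1 ^ 2) * (4 - (v i - 4) ^ 2 - 1 ^ 2)) := by
        rw [Finset.mul_sum]
        refine Finset.sum_le_sum fun i _ => ?_
        rw [mul_comm]
        refine mul_le_mul_of_nonneg_left ?_ (sq_nonneg _)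
        obtain ⟨h3, h5⟩ := hv i
        have a1 : 9 ≤ v i ^ 2 := by nlinarith
        have a2 : 2 ≤ 3 - (v i - 4) ^ 2 := by nlinarith
        nlinarith [mul_nonneg (sub_nonneg.2 a1) (sub_nonneg.2 a2)]
      set B := ∑ i, eval ![v i, 1] p ^ 2 with hB
      have hgP : -(22 * δ ^ 2) ≤ -((1 - (-δ) ^ 2 - 1 ^ 2) * (4 - (-δ - 4) ^ 2 - 1 ^ 2)) := by
        have : 13 + 8 * δ + δ ^ 2 ≤ 22 := by nlinarith
        nlinarith [mul_le_mul_of_nonneg_left this (sq_nonneg δ)]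
      have c1 := mul_le_mul_of_nonneg_left hgP hA0
      have c2 := mul_le_mul_of_nonneg_left hs hμ0
      have c3 := mul_le_mul_of_nonneg_left hb (sq_nonneg δ)
      have c4 : 0 ≤ δ ^ 2 * (K * B) := le_trans (by positivity) c3
      have c5 : μ * (18 * B) = 36 * (δ ^ 2 * (K * B)) := by rw [hμ]; ring
      linarith
    · have e1 : withOne (![-((1 - X 0 ^ 2 - X 1 ^ 2) * (4 - (X 0 - 4) ^ 2 - X 1 ^ 2)),
          1 - X 1] : Fin 2 → MvPolynomial (Fin 2) ℝ) 2 = 1 - X 1 := rfl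
      change 0 ≤ eval _ (_ * withOne _ 2) + μ * ∑ i, eval _ (_ * withOne _ 2)
      rw [e1]
      simp
  · simp only [hΦ, eval_X, Matrix.cons_val_one, Finset.sum_const, Finset.card_univ,
      Fintype.card_fin, nsmul_eq_mul]
    push_cast
    rw [inv_mul_eq_one₀ hw0.ne', hw, hN]; ring
  · simp only [hΦ, eval_X, Matrix.cons_val_zero]
    apply mul_neg_of_pos_of_neg (by positivity)
    have h1 := mul_le_mul_of_nonneg_left hsumle hμ0
    have h2 : μ * (5 * N) = 10 / 11 * δ := by
      rw [hμ]; linear_combination (10 / 11) * δ * hδe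
    linarith

theorem stmt_16 :
    ∀ (g₁ g₂ : MvPolynomial (Fin 2) ℝ),
      g₁ = -((1 - X 0 ^ 2 - X 1 ^ 2) * (4 - (X 0 - 4) ^ 2 - X 1 ^ 2)) →
      g₂ = 1 - X 1 →
      ∀ g : Fin 2 → MvPolynomial (Fin 2) ℝ, g = ![g₁, g₂] →
        IsArchimedeanQM (QM g) ∧
        (∀ x ∈ SolSet g ∩ ZSet g₁, StrictlyQuasiconcaveAt g₁ x) ∧
        ∀ d : ℕ, closure (convexHull ℝ (SolSet g)) ⊂ Lasserre d g := by
  intro g₁ g₂ hg₁ hg₂ g hg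
  have hg' : g = ![-((1 - X 0 ^ 2 - X 1 ^ 2) * (4 - (X 0 - 4) ^ 2 - X 1 ^ 2)), 1 - X 1] := by
    rw [hg, hg₁, hg₂]
  refine ⟨arch_main g (by rw [hg']; rfl), fun x hx => quasi_main g₁ hg₁ x hx.2, fun d => ?_⟩
  have hS := solSet_eq g hg'
  have hcomp : IsCompact (convexHull ℝ (SolSet g)) := by
    rw [hS]
    refine isCompact_convexHull_union (isCompact_cutDisk _ _) (isCompact_cutDisk _ _)
      (convex_cutDisk _ _) (convex_cutDisk _ _) ⟨0, ?_⟩ ⟨![4, 0], ?_⟩ <;> simp [CutDisk]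
  rw [hcomp.isClosed.closure_eq, Set.ssubset_iff_exists]
  refine ⟨convexHull_min solSet_subset_lasserre convex_lasserre, ?_⟩
  obtain ⟨x, hx, h1, h0⟩ := exists_outside d g hg'
  refine ⟨x, hx, fun hmem => ?_⟩
  have : x ∈ SepSet := convexHull_min (hS ▸ cutDisk_subset_sepSet) convex_sepSet hmem
  rcases this with h | ⟨-, h⟩ <;> linarith
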